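/- Assume x̄₀ > 0 and x̄_∞ > 0, let t_∞ ≥ 0 be such that φ_t(x₀) ∉ L := {x_∞ + r D_∞ᵀ : r ∈ ℝ} for all t ≥ t_∞, and for z ∈ ℝ² set s_z = inf{t ≥ t_∞ : φ_t(x₀ + z) ∈ L}. Then for every C > 0 and ε > 0 there exists ρ > 0 such that for all z with 0 < |z| < ρ, D₀z > 0 and |z| ≤ C (D₀z), the infimum s_z is attained and finite and |s_z − (1/λ) log(x̄_∞/(D₀z))| < ε (Theorem 3.5, hitting-time asymptotics). -/

import Mathlib

/-!
In the linearizing coordinates `y = h x` the flow is `(u, v) ↦ (e^{-μt} u, e^{λt} v)`, as long as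
this point stays in the ball of radius `δ` (`phi_eq`). The asymptotics of the orbits of `x₀` and
`x_∞` force `h x₀ = (x̄₀, 0)` and `h x_∞ = (0, x̄_∞)` (`h_stable`, `h_unstable`), and `D₀`, `D_∞` are
the second row of `Dh(x₀)` and the first row of `Dh(x_∞)` (`inner_stable`, `inner_unstable`).

Membership in `L` is the vanishing of the affine function `side`. Because `Dh` and `Dh⁻¹` are within
`c < 1/2` of the identity, `side ∘ h⁻¹` is Lipschitz and increases at rate at least `1 - 2c` in the
second coordinate (`side_lipschitz`, `side_mono`); it vanishes at `(0, x̄_∞)`. Write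
`h (x₀ + z) = (u, v)`. On a fixed interval `[t_∞, T]` the perturbed orbit is close to that of `x₀`,
which misses `L`. After `T` the first coordinate is negligible, so the first zero of `side` along
the orbit occurs while the second coordinate `e^{λt} v` lies in `[x̄_∞ - η, x̄_∞ + η]`
(`isLeast_first_zero`), that is at a time close to `(1/λ) log (x̄_∞ / v)`. Finally `v / D₀z → 1`,
since `v = D₀z + o(|z|)` and `|z| ≤ C D₀z`.
-/

open Filter Topology Metric Real RealInnerProductSpace

noncomputable section

/-- An element of `ℝ²` (with the Euclidean norm) with given coordinates. -/
def vec2 (a b : ℝ) : EuclideanSpace ℝ (Fin 2) := (WithLp.equiv 2 (Fin 2 → ℝ)).symm ![a, b]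

/-- The setup of Turner, "Convergence of Markov processes near saddle fixed points",
Section 3: a saddle-type vector field `b x = B x + τ x` with `B = diag(-μ, λ)`,
a flow `φ` for `b`, a Hartman linearization `h` on a neighbourhood `U` of `0`,
and a radius `δ` on which `h` is close to the identity. -/
structure SaddleFlow where
  lam : ℝ
  mu : ℝ
  lam_pos : 0 < lam
  mu_pos : 0 < mu
  /-- the nonlinearity τ -/
  tau : EuclideanSpace ℝ (Fin 2) → EuclideanSpace ℝ (Fin 2)
  tau_smooth : ContDiff ℝ 2 tau
  tau_zero : tau 0 = 0
  dtau_zero : fderiv ℝ tau 0 = 0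
  /-- the flow of `b x = B x + τ x` -/
  phi : ℝ → EuclideanSpace ℝ (Fin 2) → EuclideanSpace ℝ (Fin 2)
  phi_zero : ∀ x, phi 0 x = x
  phi_hasDerivAt : ∀ t x, HasDerivAt (fun s => phi s x)
      (vec2 (-mu * (phi t x) 0) (lam * (phi t x) 1) + tau (phi t x)) t
  phi_add : ∀ t s x, phi (t + s) x = phi t (phi s x)
  phi_contDiff : ∀ t, ContDiff ℝ 1 (phi t)
  /-- the domain of the Hartman linearization -/
  U : Set (EuclideanSpace ℝ (Fin 2))
  U_open : IsOpen U
  U_mem : (0 : EuclideanSpace ℝ (Fin 2)) ∈ U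
  /-- the linearizing C¹ diffeomorphism `h : U → V = h '' U` and its inverse -/
  h : EuclideanSpace ℝ (Fin 2) → EuclideanSpace ℝ (Fin 2)
  hinv : EuclideanSpace ℝ (Fin 2) → EuclideanSpace ℝ (Fin 2)
  h_smooth : ∀ x ∈ U, ContDiffAt ℝ 1 h x
  hinv_smooth : ∀ y ∈ h '' U, ContDiffAt ℝ 1 hinv y
  V_open : IsOpen (h '' U)
  left_inv : ∀ x ∈ U, hinv (h x) = x
  right_inv : ∀ y ∈ h '' U, h (hinv y) = y
  /-- the Hölder exponent of the partial derivatives of `h`, `h⁻¹` -/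
  alpha0 : ℝ
  alpha0_mem : alpha0 ∈ Set.Ioc (0 : ℝ) 1
  holder : ∃ C : ℝ,
      (∀ x ∈ U, ∀ y ∈ U, ‖fderiv ℝ h x - fderiv ℝ h y‖ ≤ C * ‖x - y‖ ^ alpha0) ∧
      (∀ x ∈ h '' U, ∀ y ∈ h '' U,
        ‖fderiv ℝ hinv x - fderiv ℝ hinv y‖ ≤ C * ‖x - y‖ ^ alpha0)
  /-- `h x = x + o(|x|)` as `x → 0` -/
  h_littleO : (fun x => h x - x) =o[𝓝 (0 : EuclideanSpace ℝ (Fin 2))] (fun x => x)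
  /-- the conjugation `h (φ_t x) = e^{Bt} (h x)` -/
  h_conj : ∀ t x, x ∈ U → phi t x ∈ U →
      h (phi t x) = vec2 (Real.exp (-mu * t) * (h x) 0) (Real.exp (lam * t) * (h x) 1)
  /-- the radius δ -/
  delta : ℝ
  delta_pos : 0 < delta
  delta_lt_one : delta < 1
  ball_sub : closedBall (0 : EuclideanSpace ℝ (Fin 2)) delta ⊆ U ∩ h '' U
  /-- `sup_{0<|x|<δ} max(|h x|/|x|, |h⁻¹ x|/|x|) < 2` -/
  h_ratio : ∃ c : ℝ, c < 2 ∧ ∀ x : EuclideanSpace ℝ (Fin 2), ‖x‖ < delta →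
      ‖h x‖ ≤ c * ‖x‖ ∧ ‖hinv x‖ ≤ c * ‖x‖
  /-- `sup_{|x|<δ} max(‖Dh(x) − I‖, ‖Dh⁻¹(x) − I‖) < 1/2` -/
  deriv_close : ∃ c : ℝ, c < 1/2 ∧ ∀ x : EuclideanSpace ℝ (Fin 2), ‖x‖ < delta →
      ‖fderiv ℝ h x - ContinuousLinearMap.id ℝ (EuclideanSpace ℝ (Fin 2))‖ ≤ c ∧
      ‖fderiv ℝ hinv x - ContinuousLinearMap.id ℝ (EuclideanSpace ℝ (Fin 2))‖ ≤ c

/-! ### Coordinates and the linearized flow -/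

namespace SaddleFlow

@[simp] lemma vec2_zero (a b : ℝ) : vec2 a b 0 = a := rfl

@[simp] lemma vec2_one (a b : ℝ) : vec2 a b 1 = b := rfl

lemma plane_ext {x y : EuclideanSpace ℝ (Fin 2)} (h0 : x 0 = y 0) (h1 : x 1 = y 1) : x = y := by
  ext i
  fin_cases i
  · exact h0
  · exact h1

lemma norm_le_abs_add (x : EuclideanSpace ℝ (Fin 2)) : ‖x‖ ≤ |x 0| + |x 1| := by
  rw [EuclideanSpace.norm_eq, Fin.sum_univ_two]
  apply Real.sqrt_le_iff.2
  refine ⟨by positivity, ?_⟩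
  simp only [Real.norm_eq_abs]
  nlinarith [abs_nonneg (x 0), abs_nonneg (x 1)]

lemma abs_coord_le (x : EuclideanSpace ℝ (Fin 2)) (i : Fin 2) : |x i| ≤ ‖x‖ := by
  simpa using PiLp.norm_apply_le x i

lemma continuous_vec2 {X : Type*} [TopologicalSpace X] {f g : X → ℝ} (hf : Continuous f)
    (hg : Continuous g) : Continuous fun x => vec2 (f x) (g x) := by
  unfold vec2
  refine (PiLp.continuous_toLp 2 _).comp ?_
  refine continuous_pi fun i => ?_
  fin_cases i
  · exact hf
  · exact hg

variable (S : SaddleFlow)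

/-- The linear flow `e^{Bt}`, as a continuous linear map of the plane. -/
def lin (t : ℝ) : EuclideanSpace ℝ (Fin 2) →L[ℝ] EuclideanSpace ℝ (Fin 2) :=
  LinearMap.toContinuousLinearMap
    { toFun := fun y => vec2 (Real.exp (-S.mu * t) * y 0) (Real.exp (S.lam * t) * y 1)
      map_add' := fun x y => plane_ext (by simp [mul_add]) (by simp [mul_add])
      map_smul' := fun c x => plane_ext (by simp; ring) (by simp; ring) }

lemma lin_apply (t : ℝ) (y : EuclideanSpace ℝ (Fin 2)) :
    S.lin t y = vec2 (Real.exp (-S.mu * t) * y 0) (Real.exp (S.lam * t) * y 1) := rfl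

lemma continuous_lin (y : EuclideanSpace ℝ (Fin 2)) : Continuous fun t => S.lin t y := by
  simp only [lin_apply]
  exact continuous_vec2 (by fun_prop) (by fun_prop)

lemma continuous_phi (x : EuclideanSpace ℝ (Fin 2)) : Continuous fun t => S.phi t x :=
  continuous_iff_continuousAt.2 fun t => (S.phi_hasDerivAt t x).continuousAt

lemma mem_U {x : EuclideanSpace ℝ (Fin 2)} (hx : ‖x‖ < S.delta) : x ∈ S.U :=
  (S.ball_sub (mem_closedBall_zero_iff.2 hx.le)).1

lemma mem_V {x : EuclideanSpace ℝ (Fin 2)} (hx : ‖x‖ < S.delta) : x ∈ S.h '' S.U :=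
  (S.ball_sub (mem_closedBall_zero_iff.2 hx.le)).2

lemma h_zero : S.h 0 = 0 := by
  have := (S.h_littleO.def (c := 1) one_pos).self_of_nhds
  simpa using this

lemma h_hasFDerivAt_zero :
    HasFDerivAt S.h (ContinuousLinearMap.id ℝ (EuclideanSpace ℝ (Fin 2))) 0 := by
  rw [hasFDerivAt_iff_isLittleO_nhds_zero]
  simpa [S.h_zero] using S.h_littleO

/-- Conjugation by `h` turns a flow line into a line of the linear flow as long as the latter
stays in the ball of radius `δ`. The original flow line cannot leave `U` and come back
in between, because the set of times at which the formula holds is both open and closed. -/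
lemma phi_eq {x : EuclideanSpace ℝ (Fin 2)} (hx : x ∈ S.U) {t : ℝ} (ht : 0 ≤ t)
    (hlin : ∀ s ∈ Set.Icc 0 t, ‖S.lin s (S.h x)‖ < S.delta) :
    S.phi t x = S.hinv (S.lin t (S.h x)) := by
  let A : Set ℝ := {s | S.phi s x = S.hinv (S.lin s (S.h x))}
  have hcont : ContinuousOn (fun s => S.hinv (S.lin s (S.h x))) (Set.Icc 0 t) := by
    intro s hs
    have h1 : ContinuousAt S.hinv (S.lin s (S.h x)) :=
      (S.hinv_smooth _ (S.mem_V (hlin s hs))).continuousAt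
    exact (h1.comp (f := fun s => S.lin s (S.h x))
      (S.continuous_lin (S.h x)).continuousAt).continuousWithinAt
  have hclosed : IsClosed (A ∩ Set.Icc 0 t) := by
    have := ((S.continuous_phi x).continuousOn.sub hcont).preimage_isClosed_of_isClosed
      isClosed_Icc (isClosed_singleton (x := 0))
    convert this using 1
    ext s
    simp [A, sub_eq_zero, and_comm]
  have hsub : Set.Icc 0 t ⊆ A := by
    refine hclosed.Icc_subset_of_forall_exists_gt ?_ ?_
    · have : S.lin 0 (S.h x) = S.h x := plane_ext (by simp [lin_apply]) (by simp [lin_apply])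
      simp [A, S.phi_zero, this, S.left_inv x hx]
    · rintro s ⟨hsA, hs⟩ y hy
      have hsU : S.phi s x ∈ S.U := by
        have hsA' : S.phi s x = _ := hsA
        obtain ⟨p, hp, hpe⟩ := S.mem_V (hlin s ⟨hs.1, hs.2.le⟩)
        rw [hsA', ← hpe, S.left_inv p hp]
        exact hp
      have hev : ∀ᶠ r in 𝓝[>] s, S.phi r x ∈ S.U :=
        ((S.continuous_phi x).continuousAt.eventually (S.U_open.mem_nhds hsU)).filter_mono
          nhdsWithin_le_nhds
      obtain ⟨r, hr, hr'⟩ := (hev.and (Ioc_mem_nhdsGT hy)).exists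
      refine ⟨r, ?_, hr'⟩
      have := S.h_conj r x hx hr
      change S.phi r x = _
      rw [← S.left_inv _ hr, this, lin_apply]
  exact hsub ⟨ht, le_rfl⟩

/-! ### The data `x̄₀`, `x̄_∞`, `D₀`, `D_∞` in linearizing coordinates -/

/-- Since `h` is tangent to the identity at `0`, rescaled limits of points tending to `0`
are unchanged by `h`. -/
lemma tendsto_smul_h {p : ℝ → EuclideanSpace ℝ (Fin 2)} {c : ℝ → ℝ}
    {l : EuclideanSpace ℝ (Fin 2)} (hp : Tendsto p atTop (𝓝 0))
    (hc : Tendsto (fun t => c t • p t) atTop (𝓝 l)) :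
    Tendsto (fun t => c t • S.h (p t)) atTop (𝓝 l) := by
  have h1 : (fun t => S.h (p t) - p t) =o[atTop] p := S.h_littleO.comp_tendsto hp
  have h2 : (fun t => c t • (S.h (p t) - p t)) =o[atTop] fun t => c t • p t :=
    (Asymptotics.isBigO_refl c atTop).smul_isLittleO h1
  have h3 : Tendsto (fun t => c t • (S.h (p t) - p t)) atTop (𝓝 0) :=
    (Asymptotics.isLittleO_one_iff ℝ).1 (h2.trans_isBigO (hc.isBigO_one ℝ))
  have h4 := h3.add hc
  simpa [smul_sub] using h4

lemma eq_zero_of_tendsto_exp_mul {a k : ℝ} (hk : 0 < k)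
    (h : Tendsto (fun t : ℝ => Real.exp (k * t) * a) atTop (𝓝 0)) : a = 0 := by
  have h1 : Tendsto (fun t : ℝ => Real.exp (-(k * t))) atTop (𝓝 0) :=
    Real.tendsto_exp_neg_atTop_nhds_zero.comp (tendsto_id.const_mul_atTop hk)
  have h2 := h1.mul h
  have h3 : (fun t : ℝ => Real.exp (-(k * t)) * (Real.exp (k * t) * a)) = fun _ => a := by
    funext t
    rw [← mul_assoc, ← Real.exp_add]
    simp
  rw [h3] at h2
  simpa using tendsto_nhds_unique tendsto_const_nhds h2

lemma tendsto_coord {f : ℝ → EuclideanSpace ℝ (Fin 2)} {l : EuclideanSpace ℝ (Fin 2)}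
    (hf : Tendsto f atTop (𝓝 l)) (i : Fin 2) : Tendsto (fun t => f t i) atTop (𝓝 (l i)) :=
  ((EuclideanSpace.proj (𝕜 := ℝ) i).continuous.tendsto l).comp hf

lemma eventually_mem_U {p : ℝ → EuclideanSpace ℝ (Fin 2)} (hp : Tendsto p atTop (𝓝 0)) :
    ∀ᶠ t in atTop, p t ∈ S.U :=
  hp.eventually (S.U_open.mem_nhds S.U_mem)

lemma h_stable {x : EuclideanSpace ℝ (Fin 2)} (hx : x ∈ S.U) {xb : ℝ}
    (h0 : Tendsto (fun t => S.phi t x) atTop (𝓝 0))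
    (hxb : Tendsto (fun t => Real.exp (S.mu * t) • S.phi t x) atTop (𝓝 (vec2 xb 0))) :
    S.h x = vec2 xb 0 := by
  have h1 := S.tendsto_smul_h h0 hxb
  have h2 : (fun t => Real.exp (S.mu * t) • S.h (S.phi t x)) =ᶠ[atTop]
      fun t => vec2 (S.h x 0) (Real.exp ((S.mu + S.lam) * t) * S.h x 1) := by
    filter_upwards [S.eventually_mem_U h0] with t ht
    rw [S.h_conj t x hx ht]
    refine plane_ext ?_ ?_ <;> simp only [PiLp.smul_apply, vec2_zero, vec2_one, smul_eq_mul]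
    · rw [← mul_assoc, ← Real.exp_add]; simp
    · rw [← mul_assoc, ← Real.exp_add]; ring_nf
  have h3 := h1.congr' h2
  refine plane_ext (tendsto_nhds_unique tendsto_const_nhds (tendsto_coord h3 0)) ?_
  exact eq_zero_of_tendsto_exp_mul (add_pos S.mu_pos S.lam_pos) (tendsto_coord h3 1)

lemma h_unstable {x : EuclideanSpace ℝ (Fin 2)} (hx : x ∈ S.U) {xb : ℝ}
    (h0 : Tendsto (fun t => S.phi (-t) x) atTop (𝓝 0))
    (hxb : Tendsto (fun t => Real.exp (S.lam * t) • S.phi (-t) x) atTop (𝓝 (vec2 0 xb))) :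
    S.h x = vec2 0 xb := by
  have h1 := S.tendsto_smul_h h0 hxb
  have h2 : (fun t => Real.exp (S.lam * t) • S.h (S.phi (-t) x)) =ᶠ[atTop]
      fun t => vec2 (Real.exp ((S.mu + S.lam) * t) * S.h x 0) (S.h x 1) := by
    filter_upwards [S.eventually_mem_U h0] with t ht
    rw [S.h_conj (-t) x hx ht]
    refine plane_ext ?_ ?_ <;> simp only [PiLp.smul_apply, vec2_zero, vec2_one, smul_eq_mul]
    · rw [← mul_assoc, ← Real.exp_add]; ring_nf
    · rw [← mul_assoc, ← Real.exp_add]; simp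
  have h3 := h1.congr' h2
  refine plane_ext ?_ (tendsto_nhds_unique tendsto_const_nhds (tendsto_coord h3 1))
  exact eq_zero_of_tendsto_exp_mul (add_pos S.mu_pos S.lam_pos) (tendsto_coord h3 0)

/-- Differentiating `h ∘ φ_t = e^{Bt} ∘ h` at `x` along times `T t` for which `φ_{T t} x → 0`:
as `Dh → I` there, a rescaled limit of `Dφ_{T t}(x)` is also one of `e^{B T t} Dh(x)`. -/
lemma tendsto_lin_fderiv {x : EuclideanSpace ℝ (Fin 2)} (hx : x ∈ S.U) {T c : ℝ → ℝ}
    {M : EuclideanSpace ℝ (Fin 2) →L[ℝ] EuclideanSpace ℝ (Fin 2)}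
    (h0 : Tendsto (fun t => S.phi (T t) x) atTop (𝓝 0))
    (hM : Tendsto (fun t => c t • fderiv ℝ (S.phi (T t)) x) atTop (𝓝 M))
    (z : EuclideanSpace ℝ (Fin 2)) :
    Tendsto (fun t => c t • S.lin (T t) (fderiv ℝ S.h x z)) atTop (𝓝 (M z)) := by
  have hcont : ContinuousAt (fderiv ℝ S.h) 0 :=
    ((S.h_smooth 0 S.U_mem).fderiv_right (m := 0) (by norm_num)).continuousAt
  have h1 : Tendsto (fun t => fderiv ℝ S.h (S.phi (T t) x)) atTop
      (𝓝 (ContinuousLinearMap.id ℝ (EuclideanSpace ℝ (Fin 2)))) := by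
    rw [← S.h_hasFDerivAt_zero.fderiv]
    exact hcont.tendsto.comp h0
  have h2 : Tendsto (fun t => (fderiv ℝ S.h (S.phi (T t) x))
      ((c t • fderiv ℝ (S.phi (T t)) x) z)) atTop (𝓝 (M z)) := by
    have happ : Continuous fun p : (EuclideanSpace ℝ (Fin 2) →L[ℝ] EuclideanSpace ℝ (Fin 2)) ×
        EuclideanSpace ℝ (Fin 2) => p.1 p.2 := isBoundedBilinearMap_apply.continuous
    have h3 : Tendsto (fun t => (c t • fderiv ℝ (S.phi (T t)) x) z) atTop (𝓝 (M z)) :=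
      (happ.tendsto (M, z)).comp (hM.prodMk_nhds tendsto_const_nhds)
    exact (happ.tendsto (ContinuousLinearMap.id ℝ _, M z)).comp (h1.prodMk_nhds h3)
  refine h2.congr' ?_
  filter_upwards [S.eventually_mem_U h0] with t ht
  have hphi : HasFDerivAt (S.phi (T t)) (fderiv ℝ (S.phi (T t)) x) x :=
    ((S.phi_contDiff (T t)).differentiable (by norm_num) x).hasFDerivAt
  have hh : HasFDerivAt S.h (fderiv ℝ S.h x) x :=
    ((S.h_smooth x hx).differentiableAt (by norm_num)).hasFDerivAt
  have hh' : HasFDerivAt S.h (fderiv ℝ S.h (S.phi (T t) x)) (S.phi (T t) x) :=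
    ((S.h_smooth _ ht).differentiableAt (by norm_num)).hasFDerivAt
  have e1 := hh'.comp x hphi
  have e2 := (S.lin (T t)).hasFDerivAt.comp x hh
  have heq : S.h ∘ S.phi (T t) =ᶠ[𝓝 x] S.lin (T t) ∘ S.h := by
    filter_upwards [S.U_open.mem_nhds hx,
      hphi.continuousAt.eventually (S.U_open.mem_nhds ht)] with y hy hy'
    exact S.h_conj (T t) y hy hy'
  have e3 := (e2.congr_of_eventuallyEq heq).unique e1
  have e4 := congrArg (fun L => L z) e3
  simp only [ContinuousLinearMap.comp_apply] at e4
  simp [e4]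

/-- `D₀` is the second row of `Dh(x₀)`. -/
lemma inner_stable {x D : EuclideanSpace ℝ (Fin 2)} (hx : x ∈ S.U)
    (h0 : Tendsto (fun t => S.phi t x) atTop (𝓝 0))
    (hD : Tendsto (fun t => Real.exp (-S.lam * t) • fderiv ℝ (S.phi t) x) atTop
      (𝓝 ((innerSL ℝ D).smulRight (EuclideanSpace.single 1 (1 : ℝ)))))
    (z : EuclideanSpace ℝ (Fin 2)) : fderiv ℝ S.h x z 1 = ⟪D, z⟫ := by
  have h1 := tendsto_coord (S.tendsto_lin_fderiv (T := fun t => t) hx h0 hD z) 1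
  have h2 : (fun t => (Real.exp (-S.lam * t) • S.lin t (fderiv ℝ S.h x z)) 1) =
      fun _ => fderiv ℝ S.h x z 1 := by
    funext t
    simp only [PiLp.smul_apply, lin_apply, vec2_one, smul_eq_mul]
    rw [← mul_assoc, ← Real.exp_add]; simp
  rw [h2] at h1
  simpa using tendsto_nhds_unique tendsto_const_nhds h1

/-- `D_∞` is the first row of `Dh(x_∞)`. -/
lemma inner_unstable {x D : EuclideanSpace ℝ (Fin 2)} (hx : x ∈ S.U)
    (h0 : Tendsto (fun t => S.phi (-t) x) atTop (𝓝 0))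
    (hD : Tendsto (fun t => Real.exp (-S.mu * t) • fderiv ℝ (S.phi (-t)) x) atTop
      (𝓝 ((innerSL ℝ D).smulRight (EuclideanSpace.single 0 (1 : ℝ)))))
    (z : EuclideanSpace ℝ (Fin 2)) : fderiv ℝ S.h x z 0 = ⟪D, z⟫ := by
  have h1 := tendsto_coord (S.tendsto_lin_fderiv (T := fun t => -t) hx h0 hD z) 0
  have h2 : (fun t => (Real.exp (-S.mu * t) • S.lin (-t) (fderiv ℝ S.h x z)) 0) =
      fun _ => fderiv ℝ S.h x z 0 := by
    funext t
    simp only [PiLp.smul_apply, lin_apply, vec2_zero, smul_eq_mul]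
    rw [← mul_assoc, ← Real.exp_add]; simp
  rw [h2] at h1
  simpa using tendsto_nhds_unique tendsto_const_nhds h1

/-! ### The line `L` in linearizing coordinates -/

/-- The direction of the line `L` makes a small angle with the first axis. -/
lemma coord_unstable {x D : EuclideanSpace ℝ (Fin 2)}
    (hD : ∀ z, fderiv ℝ S.h x z 0 = ⟪D, z⟫) {c : ℝ}
    (hc : ‖fderiv ℝ S.h x - ContinuousLinearMap.id ℝ (EuclideanSpace ℝ (Fin 2))‖ ≤ c) :
    |D 0 - 1| ≤ c ∧ |D 1| ≤ c := by
  have key : ∀ i : Fin 2, |(fderiv ℝ S.h x (EuclideanSpace.single i 1) -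
      EuclideanSpace.single i (1 : ℝ)) 0| ≤ c := by
    intro i
    refine (abs_coord_le _ 0).trans ?_
    have := (fderiv ℝ S.h x - ContinuousLinearMap.id ℝ _).le_of_opNorm_le hc
      (EuclideanSpace.single i (1 : ℝ))
    simpa using this
  have h0 := key 0
  have h1 := key 1
  simp only [PiLp.sub_apply, hD] at h0 h1
  exact ⟨by simpa [EuclideanSpace.inner_single_right] using h0,
    by simpa [EuclideanSpace.inner_single_right] using h1⟩

/-- `h⁻¹ - id` is a contraction on the ball of radius `δ`. -/
lemma hinv_sub_id {c : ℝ} (hc : ∀ x : EuclideanSpace ℝ (Fin 2), ‖x‖ < S.delta →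
      ‖fderiv ℝ S.hinv x - ContinuousLinearMap.id ℝ (EuclideanSpace ℝ (Fin 2))‖ ≤ c)
    {y y' : EuclideanSpace ℝ (Fin 2)} (hy : ‖y‖ < S.delta) (hy' : ‖y'‖ < S.delta) :
    ‖(S.hinv y' - S.hinv y) - (y' - y)‖ ≤ c * ‖y' - y‖ := by
  have := Convex.norm_image_sub_le_of_norm_hasFDerivWithin_le
    (f := fun y => S.hinv y - y)
    (f' := fun y => fderiv ℝ S.hinv y - ContinuousLinearMap.id ℝ (EuclideanSpace ℝ (Fin 2)))
    (C := c) (x := y) (y := y')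
    (fun w hw => by
      have hw' : ‖w‖ < S.delta := mem_ball_zero_iff.1 hw
      exact ((((S.hinv_smooth w (S.mem_V hw')).differentiableAt (by norm_num)).hasFDerivAt).sub
        (hasFDerivAt_id w)).hasFDerivWithinAt)
    (fun w hw => hc w (mem_ball_zero_iff.1 hw))
    (convex_ball (0 : EuclideanSpace ℝ (Fin 2)) S.delta)
    (mem_ball_zero_iff.2 hy) (mem_ball_zero_iff.2 hy')
  rw [sub_sub_sub_comm]
  exact this

/-- The affine function `p ↦ det (D, p - q)`, which vanishes exactly on the line `q + ℝ D`. -/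
def side (D q p : EuclideanSpace ℝ (Fin 2)) : ℝ := D 0 * (p 1 - q 1) - D 1 * (p 0 - q 0)

lemma side_eq_zero_iff {D q p : EuclideanSpace ℝ (Fin 2)} (hD : D 0 ≠ 0) :
    side D q p = 0 ↔ ∃ r : ℝ, p = q + r • D := by
  constructor
  · intro h
    refine ⟨(p 0 - q 0) / D 0, plane_ext ?_ ?_⟩
    · simp; field_simp; ring
    · simp only [side] at h
      simp only [PiLp.add_apply, PiLp.smul_apply, smul_eq_mul]
      field_simp
      linarith
  · rintro ⟨r, rfl⟩
    simp [side]
    ring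

lemma continuous_side (D q : EuclideanSpace ℝ (Fin 2)) : Continuous (side D q) := by
  unfold side
  fun_prop

/-- In linearizing coordinates, `side` is Lipschitz. -/
lemma side_lipschitz {c : ℝ} (hc2 : c < 1 / 2)
    (hc : ∀ x : EuclideanSpace ℝ (Fin 2), ‖x‖ < S.delta →
      ‖fderiv ℝ S.hinv x - ContinuousLinearMap.id ℝ (EuclideanSpace ℝ (Fin 2))‖ ≤ c)
    {D q : EuclideanSpace ℝ (Fin 2)} (hD0 : |D 0 - 1| ≤ c) (hD1 : |D 1| ≤ c)
    {y y' : EuclideanSpace ℝ (Fin 2)} (hy : ‖y‖ < S.delta) (hy' : ‖y'‖ < S.delta) :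
    |side D q (S.hinv y') - side D q (S.hinv y)| ≤ 3 * ‖y' - y‖ := by
  have h1 := S.hinv_sub_id hc hy hy'
  have h2 : ‖S.hinv y' - S.hinv y‖ ≤ 3 / 2 * ‖y' - y‖ := by
    have := norm_add_le ((S.hinv y' - S.hinv y) - (y' - y)) (y' - y)
    rw [sub_add_cancel] at this
    nlinarith [norm_nonneg (y' - y)]
  set w := S.hinv y' - S.hinv y with hw
  have h3 : side D q (S.hinv y') - side D q (S.hinv y) = D 0 * w 1 - D 1 * w 0 := by
    simp only [side, hw, PiLp.sub_apply]
    ring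
  have hD0' : |D 0| ≤ 3 / 2 := by
    rw [abs_le] at hD0 ⊢
    constructor <;> linarith
  rw [h3]
  calc |D 0 * w 1 - D 1 * w 0| ≤ |D 0 * w 1| + |D 1 * w 0| := abs_sub _ _
    _ = |D 0| * |w 1| + |D 1| * |w 0| := by rw [abs_mul, abs_mul]
    _ ≤ 3 / 2 * ‖w‖ + 1 / 2 * ‖w‖ := by
        gcongr
        · exact abs_coord_le w 1
        · linarith
        · exact abs_coord_le w 0
    _ ≤ 3 * ‖y' - y‖ := by linarith

/-- In linearizing coordinates, `side` is uniformly increasing along vertical segments: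
both the direction of the line and the image of the vertical direction under `Dh⁻¹`
are within `c < 1/2` of the coordinate axes. -/
lemma side_mono {c : ℝ} (hc2 : c < 1 / 2)
    (hc : ∀ x : EuclideanSpace ℝ (Fin 2), ‖x‖ < S.delta →
      ‖fderiv ℝ S.hinv x - ContinuousLinearMap.id ℝ (EuclideanSpace ℝ (Fin 2))‖ ≤ c)
    {D q : EuclideanSpace ℝ (Fin 2)} (hD0 : |D 0 - 1| ≤ c) (hD1 : |D 1| ≤ c)
    {a s s' : ℝ} (hs : s ≤ s') (hy : ‖vec2 a s‖ < S.delta) (hy' : ‖vec2 a s'‖ < S.delta) :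
    (1 - 2 * c) * (s' - s) ≤ side D q (S.hinv (vec2 a s')) - side D q (S.hinv (vec2 a s)) := by
  have h1 := S.hinv_sub_id hc hy hy'
  set e := (S.hinv (vec2 a s') - S.hinv (vec2 a s)) - (vec2 a s' - vec2 a s) with he
  have hc0 : 0 ≤ c := (abs_nonneg _).trans hD1
  have hn : ‖vec2 a s' - vec2 a s‖ ≤ s' - s := by
    refine (norm_le_abs_add _).trans ?_
    simp [abs_of_nonneg (sub_nonneg.2 hs)]
  have he' : ‖e‖ ≤ c * (s' - s) := h1.trans (by gcongr)
  have e0 := (abs_coord_le e 0).trans he'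
  have e1 := (abs_coord_le e 1).trans he'
  have h3 : side D q (S.hinv (vec2 a s')) - side D q (S.hinv (vec2 a s)) =
      D 0 * ((s' - s) + e 1) - D 1 * e 0 := by
    simp only [side, he, PiLp.sub_apply, vec2_zero, vec2_one]
    ring
  rw [h3]
  have h4 : D 1 * e 0 ≤ c * (c * (s' - s)) :=
    (le_abs_self _).trans (by rw [abs_mul]; gcongr)
  have h5 : (1 - c) * ((1 - c) * (s' - s)) ≤ D 0 * ((s' - s) + e 1) := by
    have := abs_le.1 hD0
    have := abs_le.1 e1
    have hss := sub_nonneg.2 hs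
    apply mul_le_mul
    · linarith
    · linarith
    · exact mul_nonneg (by linarith) hss
    · linarith
  nlinarith

/-! ### First hitting times -/

/-- If a continuous function does not vanish on `[t₀, t₁]`, is negative at `t₁` and positive at
`t₂`, then its first zero after `t₀` exists and lies in `[t₁, t₂]`. -/
lemma isLeast_first_zero {g : ℝ → ℝ} (hg : Continuous g) {t₀ t₁ t₂ : ℝ} (h01 : t₀ ≤ t₁)
    (h12 : t₁ ≤ t₂) (hno : ∀ t ∈ Set.Icc t₀ t₁, g t ≠ 0) (h1 : g t₁ < 0) (h2 : 0 < g t₂) :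
    IsLeast {t | t₀ ≤ t ∧ g t = 0} (sInf {t | t₀ ≤ t ∧ g t = 0}) ∧
      t₁ ≤ sInf {t | t₀ ≤ t ∧ g t = 0} ∧ sInf {t | t₀ ≤ t ∧ g t = 0} ≤ t₂ := by
  obtain ⟨t, ht, ht0⟩ := intermediate_value_Icc h12 hg.continuousOn
    (show (0 : ℝ) ∈ Set.Icc (g t₁) (g t₂) from ⟨h1.le, h2.le⟩)
  have hmem : t ∈ {t | t₀ ≤ t ∧ g t = 0} := ⟨h01.trans ht.1, ht0⟩
  have hbdd : BddBelow {t | t₀ ≤ t ∧ g t = 0} := ⟨t₀, fun s hs => hs.1⟩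
  have hclosed : IsClosed {t | t₀ ≤ t ∧ g t = 0} :=
    (isClosed_le continuous_const continuous_id).inter (isClosed_eq hg continuous_const)
  have hleast := hclosed.isLeast_csInf ⟨t, hmem⟩ hbdd
  refine ⟨hleast, ?_, (csInf_le hbdd hmem).trans ht.2⟩
  by_contra! hlt
  exact hno _ ⟨hleast.1.1, hlt.le⟩ hleast.1.2

lemma norm_lin_le {u v t s : ℝ} (ht : 0 ≤ t) (hv : 0 ≤ v) (hs : Real.exp (S.lam * t) * v ≤ s) :
    ‖S.lin t (vec2 u v)‖ ≤ |u| + s := by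
  refine (norm_le_abs_add _).trans ?_
  simp only [lin_apply, vec2_zero, vec2_one]
  rw [abs_mul, abs_of_pos (Real.exp_pos _), abs_of_nonneg (by positivity : 0 ≤ _ * v)]
  have : Real.exp (-S.mu * t) ≤ 1 := by
    rw [Real.exp_le_one_iff]
    nlinarith [S.mu_pos]
  gcongr
  exact mul_le_of_le_one_left (abs_nonneg _) this

end SaddleFlow

/-! ### Hitting-time asymptotics -/

set_option maxHeartbeats 1000000 in
/-- Theorem 3.5 (hitting-time asymptotics): for `z → 0` with `D₀z > 0` and
`|z| ≤ C D₀z`, the first time `s_z ≥ t_∞` at which `φ_t(x₀+z)` hits the line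
`L = {x_∞ + r D_∞ᵀ}` is attained, and `s_z − (1/λ) log(x̄_∞/(D₀z)) → 0`. -/
theorem hitting_time_asymptotics
    (S : SaddleFlow) (x₀ : EuclideanSpace ℝ (Fin 2))
    (hx₀_pos : 0 < ‖x₀‖) (hx₀_lt : ‖x₀‖ < S.delta / 8)
    (hx₀_stable : Tendsto (fun t => S.phi t x₀) atTop (𝓝 (0 : EuclideanSpace ℝ (Fin 2))))
    (xb : ℝ) (hxb_pos : 0 < xb) (hxb_lt : |xb| < S.delta / 4)
    (hxb : Tendsto (fun t => Real.exp (S.mu * t) • S.phi t x₀) atTop (𝓝 (vec2 xb 0)))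
    (D₀ : EuclideanSpace ℝ (Fin 2)) (hD₀_ne : D₀ ≠ 0)
    (hD₀ : Tendsto (fun t => Real.exp (-S.lam * t) • fderiv ℝ (S.phi t) x₀) atTop
      (𝓝 ((innerSL ℝ D₀).smulRight (EuclideanSpace.single 1 (1 : ℝ)))))
    (xinf : EuclideanSpace ℝ (Fin 2)) (hxinf_pos : 0 < ‖xinf‖) (hxinf_lt : ‖xinf‖ < S.delta / 8)
    (hxinf_stable : Tendsto (fun t => S.phi (-t) xinf) atTop (𝓝 (0 : EuclideanSpace ℝ (Fin 2))))
    (xbinf : ℝ) (hxbinf_pos : 0 < xbinf) (hxbinf_lt : |xbinf| < S.delta / 4)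
    (hxbinf : Tendsto (fun t => Real.exp (S.lam * t) • S.phi (-t) xinf) atTop
      (𝓝 (vec2 0 xbinf)))
    (Dinf : EuclideanSpace ℝ (Fin 2)) (hDinf_ne : Dinf ≠ 0)
    (hDinf : Tendsto (fun t => Real.exp (-S.mu * t) • fderiv ℝ (S.phi (-t)) xinf) atTop
      (𝓝 ((innerSL ℝ Dinf).smulRight (EuclideanSpace.single 0 (1 : ℝ)))))
    (tinf : ℝ) (htinf : 0 ≤ tinf)
    (hmiss : ∀ t : ℝ, tinf ≤ t → ¬ ∃ r : ℝ, S.phi t x₀ = xinf + r • Dinf) :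
    ∀ C : ℝ, 0 < C → ∀ ε : ℝ, 0 < ε → ∃ ρ : ℝ, 0 < ρ ∧
      ∀ z : EuclideanSpace ℝ (Fin 2), 0 < ‖z‖ → ‖z‖ < ρ → 0 < ⟪D₀, z⟫ →
        ‖z‖ ≤ C * ⟪D₀, z⟫ →
        IsLeast {t : ℝ | tinf ≤ t ∧ ∃ r : ℝ, S.phi t (x₀ + z) = xinf + r • Dinf}
          (sInf {t : ℝ | tinf ≤ t ∧ ∃ r : ℝ, S.phi t (x₀ + z) = xinf + r • Dinf}) ∧
        |sInf {t : ℝ | tinf ≤ t ∧ ∃ r : ℝ, S.phi t (x₀ + z) = xinf + r • Dinf} -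
          (1 / S.lam) * Real.log (xbinf / ⟪D₀, z⟫)| < ε := by
  have hδ := S.delta_pos
  have hlam := S.lam_pos
  have hmu := S.mu_pos
  have hx₀δ : ‖x₀‖ < S.delta := by linarith
  have hxiδ : ‖xinf‖ < S.delta := by linarith
  have hh₀ := S.h_stable (S.mem_U hx₀δ) hx₀_stable hxb
  have hhi := S.h_unstable (S.mem_U hxiδ) hxinf_stable hxbinf
  have hDh₀ := S.inner_stable (S.mem_U hx₀δ) hx₀_stable hD₀
  have hDhi := S.inner_unstable (S.mem_U hxiδ) hxinf_stable hDinf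
  obtain ⟨c, hc2, hc⟩ := S.deriv_close
  have hcinv := fun x hx => (hc x hx).2
  obtain ⟨hd0, hd1⟩ := S.coord_unstable hDhi (hc xinf hxiδ).1
  have hDpos : Dinf 0 ≠ 0 := by
    have := abs_le.1 hd0
    intro h
    linarith
  rw [abs_of_pos hxb_pos] at hxb_lt
  rw [abs_of_pos hxbinf_pos] at hxbinf_lt
  have hside_inf : SaddleFlow.side Dinf xinf (S.hinv (vec2 0 xbinf)) = 0 := by
    rw [← hhi, S.left_inv _ (S.mem_U hxiδ)]
    simp [SaddleFlow.side]
  simp only [← SaddleFlow.side_eq_zero_iff (q := xinf) hDpos] at hmiss ⊢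
  intro C hC ε hε
  -- The hitting time is within `ε` as soon as the final height is within `η` of `x̄_∞`
  -- and `v / D₀z` is within `θ` of `1`.
  obtain ⟨η, hη, hη1, hη2, hηlog⟩ : ∃ η : ℝ, 0 < η ∧ η < xbinf ∧ η ≤ S.delta / 8 ∧
      ∀ s : ℝ, |s - xbinf| ≤ η → |Real.log s - Real.log xbinf| < S.lam * ε / 2 := by
    obtain ⟨r, hr, hr'⟩ := Metric.continuousAt_iff.1
      (Real.continuousAt_log hxbinf_pos.ne') (S.lam * ε / 2) (by positivity)
    refine ⟨min (r / 2) (min (xbinf / 2) (S.delta / 8)), by positivity, ?_, ?_, ?_⟩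
    · have := (min_le_right (r / 2) _).trans (min_le_left (xbinf / 2) (S.delta / 8))
      linarith
    · exact (min_le_right (r / 2) _).trans (min_le_right (xbinf / 2) (S.delta / 8))
    · intro s hs
      have := hs.trans (min_le_left _ _)
      exact hr' (by rw [Real.dist_eq]; linarith)
  obtain ⟨θ, hθ, hθ1, hθlog⟩ : ∃ θ : ℝ, 0 < θ ∧ θ ≤ 1 / 2 ∧
      ∀ r : ℝ, |r - 1| ≤ θ → |Real.log r| < S.lam * ε / 2 := by
    obtain ⟨r, hr, hr'⟩ := Metric.continuousAt_iff.1
      (Real.continuousAt_log one_ne_zero) (S.lam * ε / 2) (by positivity)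
    refine ⟨min (r / 2) (1 / 2), by positivity, min_le_right _ _, ?_⟩
    intro s hs
    have := hs.trans (min_le_left _ _)
    have h2 := @hr' s (by rw [Real.dist_eq]; linarith)
    simpa [Real.dist_eq] using h2
  -- After time `T` the first linearized coordinate is negligible compared with `η`.
  obtain ⟨T, hT, hTsmall⟩ : ∃ T : ℝ, tinf ≤ T ∧
      3 * (Real.exp (-S.mu * T) * (S.delta / 2)) < (1 - 2 * c) * η := by
    have h1 : Tendsto (fun t : ℝ => Real.exp (-(S.mu * t))) atTop (𝓝 0) :=
      Real.tendsto_exp_neg_atTop_nhds_zero.comp (tendsto_id.const_mul_atTop hmu)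
    have h2 : Tendsto (fun t : ℝ => 3 * (Real.exp (-S.mu * t) * (S.delta / 2))) atTop (𝓝 0) := by
      simpa using (h1.mul_const (S.delta / 2)).const_mul 3
    exact ((eventually_ge_atTop tinf).and
      (h2.eventually (gt_mem_nhds (mul_pos (by linarith) hη)))).exists
  have hT0 : 0 ≤ T := htinf.trans hT
  -- On `[t_∞, T]` the unperturbed orbit keeps a positive distance from the line.
  obtain ⟨m, hm, hmle⟩ : ∃ m : ℝ, 0 < m ∧
      ∀ t ∈ Set.Icc tinf T, m ≤ |SaddleFlow.side Dinf xinf (S.phi t x₀)| := by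
    obtain ⟨t, ht, hmin⟩ := isCompact_Icc.exists_isMinOn (Set.nonempty_Icc.2 hT)
      (((SaddleFlow.continuous_side Dinf xinf).comp (S.continuous_phi x₀)).abs.continuousOn
        (s := Set.Icc tinf T))
    exact ⟨_, abs_pos.2 (hmiss t ht.1), fun s hs => hmin hs⟩
  -- The tolerance on `h (x₀ + z) - h x₀`.
  obtain ⟨γ, hγ, hγδ, hγm, hγη⟩ : ∃ γ : ℝ, 0 < γ ∧ γ ≤ S.delta / 4 ∧
      3 * (γ + Real.exp (S.lam * T) * γ) < m ∧ Real.exp (S.lam * T) * γ ≤ xbinf - η := by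
    have h1 : Tendsto (fun γ : ℝ => 3 * (γ + Real.exp (S.lam * T) * γ)) (𝓝[>] 0) (𝓝 0) := by
      refine (Continuous.tendsto' (by fun_prop) _ _ (by simp)).mono_left nhdsWithin_le_nhds
    have h2 : Tendsto (fun γ : ℝ => Real.exp (S.lam * T) * γ) (𝓝[>] 0) (𝓝 0) := by
      refine (Continuous.tendsto' (by fun_prop) _ _ (by simp)).mono_left nhdsWithin_le_nhds
    have h3 : Tendsto (fun γ : ℝ => γ) (𝓝[>] 0) (𝓝 0) := nhdsWithin_le_nhds
    obtain ⟨γ, h1, h2, h3, h4⟩ := ((h1.eventually (gt_mem_nhds hm)).and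
      ((h2.eventually (gt_mem_nhds (sub_pos.2 hη1))).and
      ((h3.eventually (gt_mem_nhds (by positivity : 0 < S.delta / 4))).and
        self_mem_nhdsWithin))).exists
    exact ⟨γ, h4, h3.le, h1, h2.le⟩
  obtain ⟨ρ, hρ, hz⟩ : ∃ ρ : ℝ, 0 < ρ ∧ ∀ z : EuclideanSpace ℝ (Fin 2), ‖z‖ < ρ →
      ‖x₀ + z‖ < S.delta ∧ ‖S.h (x₀ + z) - S.h x₀‖ ≤ γ ∧
      ‖S.h (x₀ + z) - S.h x₀ - fderiv ℝ S.h x₀ z‖ ≤ θ / C * ‖z‖ := by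
    have hdiff : HasFDerivAt S.h (fderiv ℝ S.h x₀) x₀ :=
      ((S.h_smooth x₀ (S.mem_U hx₀δ)).differentiableAt (by norm_num)).hasFDerivAt
    have h1 := (hasFDerivAt_iff_isLittleO_nhds_zero.1 hdiff).def (by positivity : 0 < θ / C)
    have hadd : Tendsto (fun z => x₀ + z) (𝓝 0) (𝓝 x₀) :=
      Continuous.tendsto' (by fun_prop) _ _ (by simp)
    have h2 : ∀ᶠ z in 𝓝 (0 : EuclideanSpace ℝ (Fin 2)), ‖x₀ + z‖ < S.delta :=
      hadd.norm.eventually (gt_mem_nhds hx₀δ)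
    have h3 : ∀ᶠ z in 𝓝 (0 : EuclideanSpace ℝ (Fin 2)), ‖S.h (x₀ + z) - S.h x₀‖ < γ := by
      have := ((hdiff.continuousAt.tendsto.comp hadd).sub_const (S.h x₀)).norm
      rw [sub_self, norm_zero] at this
      exact this.eventually (gt_mem_nhds hγ)
    obtain ⟨ρ, hρ, h⟩ := Metric.eventually_nhds_iff.1 (h1.and (h2.and h3))
    refine ⟨ρ, hρ, fun z hz => ?_⟩
    obtain ⟨a1, a2, a3⟩ := h (y := z) (by simpa using hz)
    exact ⟨a2, a3.le, a1⟩
  refine ⟨ρ, hρ, fun z _ hzρ hd hzC => ?_⟩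
  obtain ⟨hxz, hγz, hθz⟩ := hz z hzρ
  set d : ℝ := ⟪D₀, z⟫ with hd_def
  set u := S.h (x₀ + z) 0 with hu_def
  set v := S.h (x₀ + z) 1 with hv_def
  have huv : S.h (x₀ + z) = vec2 u v := SaddleFlow.plane_ext rfl rfl
  have hu : |u - xb| ≤ γ := by
    have := (SaddleFlow.abs_coord_le _ 0).trans hγz
    simpa [hh₀] using this
  have hv : |v| ≤ γ := by
    have := (SaddleFlow.abs_coord_le _ 1).trans hγz
    simpa [hh₀] using this
  have hvd : |v - d| ≤ θ * d := by
    have h1 := (SaddleFlow.abs_coord_le _ 1).trans hθz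
    have h2 : θ / C * ‖z‖ ≤ θ * d := by
      calc θ / C * ‖z‖ ≤ θ / C * (C * d) := by gcongr
        _ = θ * d := by field_simp
    have h3 := h1.trans h2
    simpa [hh₀, hDh₀] using h3
  have hvpos : 0 < v := by
    have := abs_le.1 hvd
    nlinarith
  rw [abs_of_pos hvpos] at hv
  have hu2 : |u| ≤ S.delta / 2 := by
    have := abs_le.1 hu
    rw [abs_le]
    constructor <;> linarith
  -- The time at which the second linearized coordinate equals `s`.
  let τ : ℝ → ℝ := fun s => (1 / S.lam) * Real.log (s / v)
  have hτ : ∀ s, 0 < s → Real.exp (S.lam * τ s) * v = s := by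
    intro s hs
    have : S.lam * τ s = Real.log (s / v) := by
      simp only [τ]
      field_simp
    rw [this, Real.exp_log (by positivity)]
    field_simp
  have hle : ∀ t s, 0 < s → (t ≤ τ s ↔ Real.exp (S.lam * t) * v ≤ s) := by
    intro t s hs
    nth_rewrite 2 [← hτ s hs]
    rw [mul_le_mul_iff_left₀ hvpos, Real.exp_le_exp, mul_le_mul_iff_right₀ hlam]
  have hs1 : 0 < xbinf - η := by linarith
  have hs2 : 0 < xbinf + η := by linarith
  have hT1 : T ≤ τ (xbinf - η) := by
    rw [hle _ _ hs1]
    exact (mul_le_mul_of_nonneg_left hv (Real.exp_pos _).le).trans hγη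
  have h12 : τ (xbinf - η) ≤ τ (xbinf + η) := by
    rw [hle _ _ hs2, hτ _ hs1]
    linarith
  have hnorm : ∀ t ∈ Set.Icc 0 (τ (xbinf + η)), ‖S.lin t (vec2 u v)‖ < S.delta := by
    intro t ht
    have := S.norm_lin_le (u := u) ht.1 hvpos.le ((hle t _ hs2).1 ht.2)
    linarith
  have hphi : ∀ t ∈ Set.Icc 0 (τ (xbinf + η)),
      S.phi t (x₀ + z) = S.hinv (S.lin t (vec2 u v)) := by
    intro t ht
    rw [← huv]
    refine S.phi_eq (S.mem_U hxz) ht.1 fun s hs => ?_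
    rw [huv]
    exact hnorm s ⟨hs.1, hs.2.trans ht.2⟩
  have hnorm₀ : ∀ t : ℝ, 0 ≤ t → ‖S.lin t (vec2 xb 0)‖ < S.delta := by
    intro t ht
    have := S.norm_lin_le (u := xb) (v := 0) (s := 0) ht le_rfl (by simp)
    rw [abs_of_pos hxb_pos] at this
    linarith
  have hphi₀ : ∀ t : ℝ, 0 ≤ t → S.phi t x₀ = S.hinv (S.lin t (vec2 xb 0)) := by
    intro t ht
    rw [← hh₀]
    refine S.phi_eq (S.mem_U hx₀δ) ht fun s hs => ?_
    rw [hh₀]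
    exact hnorm₀ s hs.1
  -- Up to time `T` the perturbed orbit shadows the unperturbed one, which misses the line.
  have hno1 : ∀ t ∈ Set.Icc tinf T, SaddleFlow.side Dinf xinf (S.phi t (x₀ + z)) ≠ 0 := by
    intro t ht h0
    have ht0 : 0 ≤ t := htinf.trans ht.1
    have htI : t ∈ Set.Icc 0 (τ (xbinf + η)) := ⟨ht0, ht.2.trans (hT1.trans h12)⟩
    have h1 := S.side_lipschitz hc2 hcinv (q := xinf) hd0 hd1 (hnorm t htI) (hnorm₀ t ht0)
    rw [← hphi t htI, ← hphi₀ t ht0, h0, sub_zero] at h1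
    have h2 := hmle t ht
    have h3 : ‖S.lin t (vec2 xb 0) - S.lin t (vec2 u v)‖ ≤ γ + Real.exp (S.lam * T) * γ := by
      have e : S.lin t (vec2 xb 0) - S.lin t (vec2 u v) = -S.lin t (vec2 (u - xb) v) :=
        SaddleFlow.plane_ext (by simp [SaddleFlow.lin_apply]; ring) (by simp [SaddleFlow.lin_apply])
      rw [e, norm_neg]
      have h4 : Real.exp (S.lam * t) * v ≤ Real.exp (S.lam * T) * γ := by
        gcongr
        exact ht.2
      have := S.norm_lin_le (u := u - xb) ht0 hvpos.le h4
      linarith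
    linarith
  -- After time `T` the SaddleFlow.side of the line is governed by the second linearized coordinate alone.
  have hbase : ∀ t : ℝ, T ≤ t →
      ‖vec2 (Real.exp (-S.mu * t) * u) xbinf‖ < S.delta ∧
      |SaddleFlow.side Dinf xinf (S.hinv (vec2 (Real.exp (-S.mu * t) * u) xbinf))| < (1 - 2 * c) * η := by
    intro t ht
    have ha : |Real.exp (-S.mu * t) * u| ≤ Real.exp (-S.mu * T) * (S.delta / 2) := by
      rw [abs_mul, abs_of_pos (Real.exp_pos _)]
      apply mul_le_mul _ hu2 (abs_nonneg _) (Real.exp_pos _).le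
      rw [Real.exp_le_exp, neg_mul, neg_mul, neg_le_neg_iff]
      exact mul_le_mul_of_nonneg_left ht hmu.le
    have hexp : Real.exp (-S.mu * T) ≤ 1 := by
      rw [Real.exp_le_one_iff, neg_mul]
      exact neg_nonpos.2 (by positivity)
    have hn : ‖vec2 (Real.exp (-S.mu * t) * u) xbinf‖ < S.delta := by
      have := SaddleFlow.norm_le_abs_add (vec2 (Real.exp (-S.mu * t) * u) xbinf)
      simp only [SaddleFlow.vec2_zero, SaddleFlow.vec2_one, abs_of_pos hxbinf_pos] at this
      have := mul_le_of_le_one_left (by positivity : 0 ≤ S.delta / 2) hexp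
      linarith
    have hn' : ‖vec2 0 xbinf‖ < S.delta := by
      have := SaddleFlow.norm_le_abs_add (vec2 0 xbinf)
      simp only [SaddleFlow.vec2_zero, SaddleFlow.vec2_one, abs_of_pos hxbinf_pos, abs_zero] at this
      linarith
    refine ⟨hn, ?_⟩
    have h1 := S.side_lipschitz hc2 hcinv (q := xinf) hd0 hd1 hn' hn
    rw [hside_inf, sub_zero] at h1
    have h2 := SaddleFlow.norm_le_abs_add (vec2 (Real.exp (-S.mu * t) * u) xbinf - vec2 0 xbinf)
    simp only [PiLp.sub_apply, SaddleFlow.vec2_zero, SaddleFlow.vec2_one, sub_self, sub_zero, abs_zero,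
      add_zero] at h2
    linarith
  have hneg : ∀ t ∈ Set.Icc T (τ (xbinf - η)), SaddleFlow.side Dinf xinf (S.phi t (x₀ + z)) < 0 := by
    intro t ht
    have htI : t ∈ Set.Icc 0 (τ (xbinf + η)) := ⟨hT0.trans ht.1, ht.2.trans h12⟩
    obtain ⟨hb1, hb2⟩ := hbase t ht.1
    have hs := (hle t _ hs1).1 ht.2
    have hmono := S.side_mono hc2 hcinv (q := xinf) hd0 hd1
      (a := Real.exp (-S.mu * t) * u) (s := Real.exp (S.lam * t) * v)
      (hs.trans (by linarith : xbinf - η ≤ xbinf)) (hnorm t htI) hb1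
    have hb3 := (abs_lt.1 hb2).2
    rw [hphi t htI]
    change SaddleFlow.side Dinf xinf (S.hinv (vec2 (Real.exp (-S.mu * t) * u) (Real.exp (S.lam * t) * v))) < 0
    have : (1 - 2 * c) * η ≤ (1 - 2 * c) * (xbinf - Real.exp (S.lam * t) * v) :=
      mul_le_mul_of_nonneg_left (by linarith) (by linarith)
    linarith
  have hpos : 0 < SaddleFlow.side Dinf xinf (S.phi (τ (xbinf + η)) (x₀ + z)) := by
    have htI : τ (xbinf + η) ∈ Set.Icc 0 (τ (xbinf + η)) :=
      ⟨hT0.trans (hT1.trans h12), le_rfl⟩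
    obtain ⟨hb1, hb2⟩ := hbase _ (hT1.trans h12)
    have hs := hτ _ hs2
    have hn := hnorm _ htI
    have hb3 := (abs_lt.1 hb2).1
    rw [hphi _ htI]
    simp only [SaddleFlow.lin_apply, SaddleFlow.vec2_zero, SaddleFlow.vec2_one, hs] at hn ⊢
    have hmono := S.side_mono hc2 hcinv (q := xinf) hd0 hd1
      (by linarith : xbinf ≤ xbinf + η) hb1 hn
    rw [add_sub_cancel_left] at hmono
    linarith
  obtain ⟨hleast, hlo, hhi'⟩ := SaddleFlow.isLeast_first_zero
    (g := fun t => SaddleFlow.side Dinf xinf (S.phi t (x₀ + z)))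
    ((SaddleFlow.continuous_side Dinf xinf).comp (S.continuous_phi (x₀ + z)))
    (hT.trans hT1) h12
    (fun t ht => (le_total t T).elim (fun h => hno1 t ⟨ht.1, h⟩)
      (fun h => (hneg t ⟨h, ht.2⟩).ne))
    (hneg _ ⟨hT1, le_rfl⟩) hpos
  refine ⟨hleast, ?_⟩
  have hτε : ∀ s : ℝ, 0 < s → |s - xbinf| ≤ η →
      |τ s - (1 / S.lam) * Real.log (xbinf / d)| < ε := by
    intro s hs hsη
    have e : τ s - (1 / S.lam) * Real.log (xbinf / d) =
        (1 / S.lam) * ((Real.log s - Real.log xbinf) - Real.log (v / d)) := by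
      simp only [τ]
      rw [Real.log_div hs.ne' hvpos.ne', Real.log_div hxbinf_pos.ne' hd.ne',
        Real.log_div hvpos.ne' hd.ne']
      ring
    have h1 := hηlog s hsη
    have h2 := hθlog (v / d) (by
      rw [div_sub_one hd.ne', abs_div, abs_of_pos hd, div_le_iff₀ hd]
      exact hvd)
    have h3 := abs_sub (Real.log s - Real.log xbinf) (Real.log (v / d))
    rw [e, abs_mul, abs_of_pos (by positivity : 0 < 1 / S.lam), one_div, inv_mul_lt_iff₀ hlam]
    linarith
  have hA := abs_lt.1 (hτε _ hs1 (by simp [abs_of_pos hη]))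
  have hB := abs_lt.1 (hτε _ hs2 (by simp [abs_of_pos hη]))
  rw [abs_lt]
  constructor <;> linarith
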